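/- There exists a constant c > 0 such that the following holds: for every finite indexed family 𝒟 of closed unit disks in ℝ² with pairwise distinct centers, every natural number k, and every circle C of radius 1 whose center is distinct from the centers of all disks in 𝒟, the number of points x ∈ C that lie on the boundary circle of at least one disk of 𝒟 and satisfy λ(x,𝒟) ≤ k is at most c·(k+1). (A unit circle intersects only O(k) edges of A_{≤k}(𝒟).) -/

import Mathlib

noncomputable section

/-- The plane ℝ². -/
abbrev E2 := EuclideanSpace ℝ (Fin 2)

/-- The level λ(x,𝒟) of a point with respect to an indexed family of sets:
the number of indices `i` with `x ∉ D i`. -/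
def level {I : Type*} (D : I → Set E2) (x : E2) : ℕ := {i | x ∉ D i}.ncard

/-!
If `p` is one of the points to be counted, at most `k` disks miss `p`, and their boundaries meet the
circle `C` in at most `2 * k` points. Every other counted point `y` lies on the boundary of a disk
containing `p`. This disk cuts out of `C` an arc shorter than a semicircle that contains `p` and
ends at `y`, so it misses every point of `C` farther from `p` than `y` on the same side of `p`.
Hence, on each side, the farthest counted point is missed by a different disk for each of the
others, which leaves at most `k + 1` points per side.
-/

open Metric Module Set
open scoped RealInnerProductSpace

section Counting

variable {α β ι : Type*}

theorem encard_biUnion_le_mul {t : Set ι} {A : ι → Set α} {m : ℕ∞} (ht : t.Finite)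
    (hA : ∀ i ∈ t, (A i).encard ≤ m) : (⋃ i ∈ t, A i).encard ≤ t.encard * m := by
  lift t to Finset ι using ht
  calc (⋃ i ∈ t, A i).encard
      ≤ ∑ i ∈ t, (A i).encard := t.set_encard_biUnion_le A
    _ ≤ t.card • m := t.sum_le_card_nsmul _ _ hA
    _ = (t : Set ι).encard * m := by rw [encard_coe_eq_coe_finsetCard, nsmul_eq_mul]

theorem injOn_of_forall_lt_notMem [LinearOrder β] {D : ι → Set α} {T : Set α} {f : α → β}
    {j : α → ι} (hf : InjOn f T) (hj : ∀ y ∈ T, y ∈ D (j y))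
    (hlt : ∀ y ∈ T, ∀ x ∈ T, f x < f y → x ∉ D (j y)) : InjOn j T := by
  intro x hx y hy hxy
  refine hf hx hy (le_antisymm ?_ ?_) <;> refine le_of_not_gt fun h => ?_
  · exact hlt x hx y hy h (hxy ▸ hj y hy)
  · exact hlt y hy x hx h (hxy ▸ hj x hx)

theorem encard_le_add_one_of_finite_of_forall_lt_notMem [LinearOrder β] {D : ι → Set α}
    {T : Set α} {f : α → β} {k : ℕ∞} (hT : T.Finite) (hf : InjOn f T)
    (hk : ∀ x ∈ T, {i | x ∉ D i}.encard ≤ k)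
    (hD : ∀ y ∈ T, ∃ i, y ∈ D i ∧ ∀ x ∈ T, f x < f y → x ∉ D i) : T.encard ≤ k + 1 := by
  obtain rfl | hne := T.eq_empty_or_nonempty
  · simp
  obtain ⟨m, hm, hmin⟩ := exists_min_image T f hT hne
  have : Nonempty ι := ⟨(hD m hm).choose⟩
  choose! j hj hlt using hD
  have hmaps : MapsTo j (T \ {m}) {i | m ∉ D i} := fun y hy =>
    hlt y hy.1 m hm ((hmin y hy.1).lt_of_ne fun h => hy.2 (hf hm hy.1 h).symm)
  have hinj : InjOn j (T \ {m}) := (injOn_of_forall_lt_notMem hf hj hlt).mono sdiff_subset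
  calc T.encard = (T \ {m}).encard + 1 := (encard_sdiff_singleton_add_one hm).symm
    _ ≤ k + 1 := by gcongr; exact (encard_le_encard_of_injOn hmaps hinj).trans (hk m hm)

theorem encard_le_add_one_of_forall_lt_notMem [LinearOrder β] {D : ι → Set α} {T : Set α}
    {f : α → β} {k : ℕ} (hf : InjOn f T) (hk : ∀ x ∈ T, {i | x ∉ D i}.encard ≤ k)
    (hD : ∀ y ∈ T, ∃ i, y ∈ D i ∧ ∀ x ∈ T, f x < f y → x ∉ D i) : T.encard ≤ k + 1 := by
  by_contra! hlt
  obtain ⟨T', hT', hcard⟩ := exists_subset_encard_eq (Order.add_one_le_of_lt hlt)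
  have hfin : T'.Finite := finite_of_encard_eq_coe (k := k + 2) (by rw [hcard]; norm_cast)
  have hle := encard_le_add_one_of_finite_of_forall_lt_notMem hfin (hf.mono hT')
    (fun x hx => hk x (hT' hx)) fun y hy =>
      (hD y (hT' hy)).imp fun i hi => ⟨hi.1, fun x hx => hi.2 x (hT' hx)⟩
  rw [hcard] at hle
  norm_cast at hle
  omega

end Counting

section Vectors

variable {V : Type*} [NormedAddCommGroup V] [InnerProductSpace ℝ V] [Fact (finrank ℝ V = 2)]
  (o : Orientation ℝ V (Fin 2))

local notation "ω" => o.areaForm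

theorem areaForm_smul_add_areaForm_smul (u x y : V) : ω y x • u + ω u y • x = ω u x • y := by
  refine ext_inner_left ℝ fun a => ?_
  obtain rfl | ha := eq_or_ne a 0
  · simp
  refine mul_left_cancel₀ (pow_ne_zero 2 (norm_ne_zero_iff.2 ha)) ?_
  simp only [inner_add_right, real_inner_smul_right]
  linear_combination ⟪a, y⟫ * o.inner_mul_areaForm_sub a u x -
    ⟪a, u⟫ * o.inner_mul_areaForm_sub a y x - ⟪a, x⟫ * o.inner_mul_areaForm_sub a u y

variable {o}

theorem eq_of_norm_eq_of_areaForm_eq_zero {x y : V} (hxy : ‖x‖ = ‖y‖) (hinner : 0 ≤ ⟪x, y⟫)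
    (harea : ω x y = 0) : x = y :=
  (sameRay_iff_of_norm_eq hxy).1 ((o.nonneg_inner_and_areaForm_eq_zero_iff_sameRay x y).1
    ⟨hinner, harea⟩)

theorem areaForm_lt_areaForm_add_areaForm {u x y : V} (hux : ‖u‖ = ‖x‖) (huy : ‖u‖ = ‖y‖)
    (huy_pos : 0 < ω u y) (hyx_pos : 0 < ω y x) : ω u x < ω y x + ω u y := by
  obtain hneg | hpos := le_or_gt (ω u x) 0
  · exact hneg.trans_lt (add_pos hyx_pos huy_pos)
  have hu : 0 < ‖u‖ := norm_pos_iff.2 fun h => by simp [h] at hpos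
  have hray : ¬SameRay ℝ (ω y x • u) (ω u y • x) := by
    rw [← o.nonneg_inner_and_areaForm_eq_zero_iff_sameRay]
    rintro ⟨-, hzero⟩
    simp [hpos.ne', huy_pos.ne', hyx_pos.ne'] at hzero
  refine lt_of_mul_lt_mul_right ?_ hu.le
  calc ω u x * ‖u‖ = ‖ω y x • u + ω u y • x‖ := by
        rw [areaForm_smul_add_areaForm_smul, norm_smul, Real.norm_of_nonneg hpos.le, huy]
    _ < ‖ω y x • u‖ + ‖ω u y • x‖ := norm_add_lt_of_not_sameRay hray
    _ = (ω y x + ω u y) * ‖u‖ := by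
        rw [norm_smul, norm_smul, Real.norm_of_nonneg huy_pos.le,
          Real.norm_of_nonneg hyx_pos.le, ← hux, add_mul]

-- `y` lies beyond the chord `[u, x]`, so no closed half-plane missing `0` can contain `u` and `x`
-- and have `y` on its boundary.
theorem inner_lt_of_areaForm_pos {u x y a : V} {h : ℝ} (hux : ‖u‖ = ‖x‖) (huy : ‖u‖ = ‖y‖)
    (huy_pos : 0 < ω u y) (hyx_pos : 0 < ω y x) (hh : 0 < h)
    (hu : h ≤ ⟪u, a⟫) (hy : ⟪y, a⟫ = h) : ⟪x, a⟫ < h := by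
  by_contra! hx
  refine (areaForm_lt_areaForm_add_areaForm hux huy huy_pos hyx_pos).not_ge ?_
  refine le_of_mul_le_mul_right ?_ hh
  calc (ω y x + ω u y) * h = ω y x * h + ω u y * h := add_mul _ _ _
    _ ≤ ω y x * ⟪u, a⟫ + ω u y * ⟪x, a⟫ := by gcongr
    _ = ⟪ω y x • u + ω u y • x, a⟫ := by simp only [inner_add_left, real_inner_smul_left]
    _ = ω u x * h := by rw [areaForm_smul_add_areaForm_smul, real_inner_smul_left, hy]

theorem eq_of_areaForm_eq_zero_of_inner_pos {u x a : V} (hux : ‖u‖ = ‖x‖) (hua : 0 < ⟪u, a⟫)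
    (hxa : 0 < ⟪x, a⟫) (harea : ω u x = 0) : u = x := by
  have hu : 0 < ‖u‖ := norm_pos_iff.2 fun h => by simp [h] at hua
  have hprod : ⟪u, x⟫ * ⟪u, a⟫ = ‖u‖ ^ 2 * ⟪x, a⟫ := by
    simpa [harea] using o.inner_mul_inner_add_areaForm_mul_areaForm u x a
  have hinner : 0 < ⟪u, x⟫ := pos_of_mul_pos_left (hprod ▸ by positivity) hua.le
  exact eq_of_norm_eq_of_areaForm_eq_zero hux hinner.le harea

variable (o) in
/-- The cotangent of the oriented angle from `u` to `v`. On the open half-plane `0 < o.areaForm u v`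
it decreases as the direction of `v` moves away from `u`, so it orders that half of a circle;
its value is `0` when `u` and `v` are parallel. -/
def orientedCot (u v : V) : ℝ := ⟪u, v⟫ / ω u v

theorem areaForm_pos_of_orientedCot_lt {u x y : V} (hx : 0 < ω u x) (hy : 0 < ω u y)
    (hlt : orientedCot o u x < orientedCot o u y) : 0 < ω y x := by
  rw [orientedCot, orientedCot, div_lt_div_iff₀ hx hy] at hlt
  refine pos_of_mul_pos_right ?_ (sq_nonneg ‖u‖)
  rw [← o.inner_mul_areaForm_sub u y x]
  linarith

theorem eq_of_orientedCot_eq {u x y : V} (hxy : ‖x‖ = ‖y‖) (hx : 0 < ω u x) (hy : 0 < ω u y)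
    (hcot : orientedCot o u x = orientedCot o u y) : x = y := by
  have hu : 0 < ‖u‖ ^ 2 := pow_pos (norm_pos_iff.2 fun h => by simp [h] at hx) 2
  have hinner_x : ⟪u, x⟫ = orientedCot o u x * ω u x := (div_mul_cancel₀ _ hx.ne').symm
  have hinner_y : ⟪u, y⟫ = orientedCot o u x * ω u y := hcot ▸ (div_mul_cancel₀ _ hy.ne').symm
  refine eq_of_norm_eq_of_areaForm_eq_zero (o := o) hxy ?_ ?_
  · refine nonneg_of_mul_nonneg_right ?_ hu
    rw [← o.inner_mul_inner_add_areaForm_mul_areaForm u x y, hinner_x, hinner_y,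
      mul_mul_mul_comm, ← sq]
    positivity
  · refine (mul_eq_zero_iff_left hu.ne').1 ?_
    rw [← o.inner_mul_areaForm_sub u x y, hinner_x, hinner_y]
    ring

end Vectors

section Circles

variable {V P : Type*} [NormedAddCommGroup V] [MetricSpace P] [NormedAddTorsor V P]

theorem norm_vsub_eq_norm_vsub_of_mem_sphere {x y z : P} {r : ℝ}
    (hx : x ∈ sphere z r) (hy : y ∈ sphere z r) : ‖x -ᵥ z‖ = ‖y -ᵥ z‖ := by
  rw [← dist_eq_norm_vsub V, ← dist_eq_norm_vsub V, mem_sphere.1 hx, mem_sphere.1 hy]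

variable [InnerProductSpace ℝ V]

theorem dist_sq_eq_sub_two_mul_inner_add (x z w : P) :
    dist x w ^ 2 = dist x z ^ 2 - 2 * ⟪x -ᵥ z, w -ᵥ z⟫ + dist w z ^ 2 := by
  rw [dist_eq_norm_vsub V x w, dist_eq_norm_vsub V x z, dist_eq_norm_vsub V w z,
    ← norm_sub_sq_real, vsub_sub_vsub_cancel_right]

-- `0 < h` says that the arc cut out by the disk is shorter than a semicircle.
theorem exists_pos_mem_closedBall_iff_le_inner {z w : P} {r s : ℝ} (hzw : z ≠ w) (hs : 0 ≤ s)
    (hsr : s ≤ r) : ∃ h : ℝ, 0 < h ∧ ∀ x ∈ sphere z r,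
      (x ∈ closedBall w s ↔ h ≤ ⟪x -ᵥ z, w -ᵥ z⟫) ∧ (x ∈ sphere w s ↔ ⟪x -ᵥ z, w -ᵥ z⟫ = h) := by
  have hdist : 0 < dist w z := dist_pos.2 hzw.symm
  have hsq : s ^ 2 ≤ r ^ 2 := by gcongr
  refine ⟨(r ^ 2 + dist w z ^ 2 - s ^ 2) / 2, by nlinarith, fun x hx => ?_⟩
  rw [mem_closedBall, mem_sphere, ← sq_le_sq₀ dist_nonneg hs, ← sq_eq_sq₀ dist_nonneg hs,
    dist_sq_eq_sub_two_mul_inner_add (V := V) x z w, mem_sphere.1 hx]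
  constructor <;> constructor <;> intro h <;> linarith

theorem encard_sphere_inter_sphere_le_two (hd : finrank ℝ V = 2) {z w : P} (hzw : z ≠ w)
    (r s : ℝ) : (sphere z r ∩ sphere w s).encard ≤ 2 := by
  obtain hsub | ⟨a, ha, b, hb, hab⟩ := (sphere z r ∩ sphere w s).subsingleton_or_nontrivial
  · exact (encard_le_one_iff_subsingleton.2 hsub).trans one_le_two
  have : FiniteDimensional ℝ V := .of_finrank_eq_succ hd
  have hpair : sphere z r ∩ sphere w s ⊆ {a, b} := fun c hc =>
    EuclideanGeometry.eq_of_dist_eq_of_dist_eq_of_finrank_eq_two hd hzw hab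
      ha.1 hb.1 hc.1 ha.2 hb.2 hc.2
  exact (encard_le_encard hpair).trans (encard_pair hab).le

/-- The points in which the circle `sphere z r` crosses the boundary circles of the disks
`closedBall (ctr i) (ρ i)` and which are missed by at most `k` of these disks, that is, the
crossings of the circle with the edges of `A_{≤k}`. The level is taken in `ℕ∞` because
`Set.ncard` would assign level `0` to a point missed by infinitely many disks. -/
def shallowCrossings {ι : Type*} (ctr : ι → P) (ρ : ι → ℝ) (k : ℕ) (z : P) (r : ℝ) : Set P :=
  {x | x ∈ sphere z r ∧ (∃ i, x ∈ sphere (ctr i) (ρ i)) ∧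
    {i | x ∉ closedBall (ctr i) (ρ i)}.encard ≤ k}

variable [Fact (finrank ℝ V = 2)]

/-- The shallow crossings lying to the left of the ray from `z` through `p` and on the boundary of a
disk containing `p`. Those to the right are obtained by reversing the orientation. -/
def leftCrossings {ι : Type*} (o : Orientation ℝ V (Fin 2)) (ctr : ι → P) (ρ : ι → ℝ) (k : ℕ)
    (z : P) (r : ℝ) (p : P) : Set P :=
  {x ∈ shallowCrossings ctr ρ k z r | 0 < o.areaForm (p -ᵥ z) (x -ᵥ z) ∧
    ∃ i, p ∈ closedBall (ctr i) (ρ i) ∧ x ∈ sphere (ctr i) (ρ i)}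

variable {ι : Type*} {ctr : ι → P} {ρ : ι → ℝ} {k : ℕ} {z p : P} {r : ℝ}
  {o : Orientation ℝ V (Fin 2)}

theorem notMem_closedBall_of_orientedCot_lt {x y w : P} {s : ℝ} (hsr : s ≤ r) (hzw : z ≠ w)
    (hp : p ∈ sphere z r) (hx : x ∈ sphere z r) (hy : y ∈ sphere z r)
    (hx_left : 0 < o.areaForm (p -ᵥ z) (x -ᵥ z)) (hy_left : 0 < o.areaForm (p -ᵥ z) (y -ᵥ z))
    (hlt : orientedCot o (p -ᵥ z) (x -ᵥ z) < orientedCot o (p -ᵥ z) (y -ᵥ z))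
    (hpw : p ∈ closedBall w s) (hyw : y ∈ sphere w s) : x ∉ closedBall w s := by
  have hs : 0 ≤ s := dist_nonneg.trans_eq hyw
  obtain ⟨h, hh, hiff⟩ := exists_pos_mem_closedBall_iff_le_inner (V := V) hzw hs hsr
  rw [(hiff x hx).1, not_le]
  exact inner_lt_of_areaForm_pos (norm_vsub_eq_norm_vsub_of_mem_sphere hp hx)
    (norm_vsub_eq_norm_vsub_of_mem_sphere hp hy) hy_left
    (areaForm_pos_of_orientedCot_lt hx_left hy_left hlt) hh ((hiff p hp).1.1 hpw)
    ((hiff y hy).2.1 hyw)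

theorem eq_of_areaForm_eq_zero_of_mem_sphere {x w : P} {s : ℝ} (hsr : s ≤ r) (hzw : z ≠ w)
    (hp : p ∈ sphere z r) (hx : x ∈ sphere z r) (hpw : p ∈ closedBall w s) (hxw : x ∈ sphere w s)
    (harea : o.areaForm (p -ᵥ z) (x -ᵥ z) = 0) : p = x := by
  have hs : 0 ≤ s := dist_nonneg.trans_eq hxw
  obtain ⟨h, hh, hiff⟩ := exists_pos_mem_closedBall_iff_le_inner (V := V) hzw hs hsr
  exact vsub_left_cancel (eq_of_areaForm_eq_zero_of_inner_pos
    (norm_vsub_eq_norm_vsub_of_mem_sphere hp hx) (hh.trans_le ((hiff p hp).1.1 hpw))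
    (hh.trans_eq ((hiff x hx).2.1 hxw).symm) harea)

theorem encard_leftCrossings_le (hρ : ∀ i, ρ i ≤ r) (hz : ∀ i, z ≠ ctr i) (hp : p ∈ sphere z r) :
    (leftCrossings o ctr ρ k z r p).encard ≤ k + 1 := by
  refine encard_le_add_one_of_forall_lt_notMem (D := fun i => closedBall (ctr i) (ρ i))
    (f := fun x => orientedCot o (p -ᵥ z) (x -ᵥ z)) ?_ (fun x hx => hx.1.2.2) ?_
  · rintro x ⟨⟨hx, -⟩, hx_left, -⟩ y ⟨⟨hy, -⟩, hy_left, -⟩ hcot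
    exact vsub_left_cancel (eq_of_orientedCot_eq (norm_vsub_eq_norm_vsub_of_mem_sphere hx hy)
      hx_left hy_left hcot)
  · rintro y ⟨⟨hy, -⟩, hy_left, i, hpi, hyi⟩
    refine ⟨i, sphere_subset_closedBall hyi, ?_⟩
    rintro x ⟨⟨hx, -⟩, hx_left, -⟩ hlt
    exact notMem_closedBall_of_orientedCot_lt (hρ i) (hz i) hp hx hy hx_left hy_left hlt hpi hyi

variable (o) in
theorem shallowCrossings_subset (hρ : ∀ i, ρ i ≤ r) (hz : ∀ i, z ≠ ctr i) (hp : p ∈ sphere z r) :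
    shallowCrossings ctr ρ k z r ⊆
      insert p ((⋃ i ∈ {i | p ∉ closedBall (ctr i) (ρ i)}, sphere z r ∩ sphere (ctr i) (ρ i)) ∪
        (leftCrossings o ctr ρ k z r p ∪ leftCrossings (-o) ctr ρ k z r p)) := by
  rintro x hx
  obtain ⟨hxz, ⟨i, hxi⟩, -⟩ := id hx
  by_cases hpi : p ∈ closedBall (ctr i) (ρ i)
  · obtain harea | harea | harea := lt_trichotomy (o.areaForm (p -ᵥ z) (x -ᵥ z)) 0
    · have hright : 0 < (-o).areaForm (p -ᵥ z) (x -ᵥ z) := by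
        simpa [o.areaForm_neg_orientation] using harea
      exact .inr (.inr (.inr ⟨hx, hright, i, hpi, hxi⟩))
    · exact .inl (eq_of_areaForm_eq_zero_of_mem_sphere (hρ i) (hz i) hp hxz hpi hxi harea).symm
    · exact .inr (.inr (.inl ⟨hx, harea, i, hpi, hxi⟩))
  · exact .inr (.inl (mem_biUnion hpi ⟨hxz, hxi⟩))

end Circles

theorem stmt6_general {V P ι : Type*} [NormedAddCommGroup V] [InnerProductSpace ℝ V] [MetricSpace P]
    [NormedAddTorsor V P] (hd : finrank ℝ V = 2) (ctr : ι → P) (ρ : ι → ℝ) (k : ℕ) (z : P) (r : ℝ)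
    (hρ : ∀ i, ρ i ≤ r) (hz : ∀ i, z ≠ ctr i) :
    (shallowCrossings ctr ρ k z r).encard ≤ 4 * k + 3 := by
  obtain hempty | ⟨p, hp, -, hpk⟩ := (shallowCrossings ctr ρ k z r).eq_empty_or_nonempty
  · simp [hempty]
  have : Fact (finrank ℝ V = 2) := ⟨hd⟩
  have : FiniteDimensional ℝ V := .of_finrank_eq_succ hd
  let o : Orientation ℝ V (Fin 2) := (finBasisOfFinrankEq ℝ V hd).orientation
  set B := {i | p ∉ closedBall (ctr i) (ρ i)}
  have hmissed : (⋃ i ∈ B, sphere z r ∩ sphere (ctr i) (ρ i)).encard ≤ k * 2 :=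
    (encard_biUnion_le_mul (finite_of_encard_le_coe hpk) fun i _ =>
      encard_sphere_inter_sphere_le_two hd (hz i) r (ρ i)).trans (by gcongr)
  calc (shallowCrossings ctr ρ k z r).encard
      ≤ (k * 2 + ((k + 1) + (k + 1))) + 1 := by
        grw [shallowCrossings_subset o hρ hz hp, encard_insert_le, encard_union_le,
          encard_union_le, hmissed, encard_leftCrossings_le hρ hz hp,
          encard_leftCrossings_le hρ hz hp]
    _ = 4 * k + 3 := by ring

theorem stmt6 :
    ∃ c : ℕ, 0 < c ∧
      ∀ (I : Type) [Fintype I] (ctr : I → E2), Function.Injective ctr →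
        ∀ k : ℕ, ∀ z : E2, (∀ i : I, z ≠ ctr i) →
          {x : E2 | x ∈ Metric.sphere z 1 ∧
              (∃ i : I, x ∈ frontier (Metric.closedBall (ctr i) 1)) ∧
              level (fun i => Metric.closedBall (ctr i) 1) x ≤ k}.encard
            ≤ ((c * (k + 1) : ℕ) : ℕ∞) := by
  refine ⟨4, by norm_num, fun I _ ctr _ k z hz => ?_⟩
  simp only [frontier_closedBall _ one_ne_zero, level, ← Nat.cast_le (α := ℕ∞),
    (toFinite _).cast_ncard_eq]
  refine (stmt6_general finrank_euclideanSpace_fin ctr (fun _ => 1) k z 1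
    (fun _ => le_rfl) hz).trans ?_
  norm_cast
  omega
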